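/- For n ≥ 1 define A_n : ℝ → ℝ by A_n(t) := Σ_{j=1}^n 2·(−1)^{j+1}·C(n+j−1, n−j)·((2j−1)!/((j−1)!·(j+1)!))·e^{−jt}. Then A_n satisfies the second-order ordinary differential equation (1 − e^t)·Ä_n(t) + (e^t − n²)·A_n(t) = 0 for all t ∈ ℝ. -/

import Mathlib

open Finset

/-- The coefficient function `A_n(t) = ∑_{j=1}^n a(n,j) e^{-jt}` of the Löwner chain
of the Koebe function, with
`a(n,j) = 2(-1)^{j+1} C(n+j-1, n-j) (2j-1)!/((j-1)!(j+1)!)`. -/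
noncomputable def koebeA (n : ℕ) (t : ℝ) : ℝ :=
  ∑ j ∈ Icc 1 n, 2 * (-1 : ℝ) ^ (j + 1) * (Nat.choose (n + j - 1) (n - j)) *
    ((Nat.factorial (2 * j - 1) : ℝ) /
      ((Nat.factorial (j - 1) : ℝ) * (Nat.factorial (j + 1) : ℝ))) *
    Real.exp (-(j : ℝ) * t)

/-!
Applied to `∑ c_j e^{-jt}`, the operator `(1 - e^t) d²/dt² + (e^t - ν)` sends the `j`-th term to
`c_j (j² - ν) e^{-jt} - c_j (j² - 1) e^{-(j-1)t}`. Hence if `c_j (j² - ν) = c_{j+1} ((j+1)² - 1)`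
for `1 ≤ j < n`, the image of `∑_{j=1}^n c_j e^{-jt}` telescopes: the lower end drops out since
`j² - 1` vanishes at `j = 1`, and only `c_n (n² - ν) e^{-nt}` is left at the upper end. The
coefficients `a(n, j)` satisfy this recurrence with `ν = n²`, for which the upper end vanishes too.
-/

/-- The coefficient `a(n, j)` of `e^{-jt}` in `A_n(t)`, meaningful for `1 ≤ j ≤ n`. For `j > n` the
truncated subtraction `n - j` makes the binomial factor `1` instead of `0`. -/
noncomputable def koebeCoeff (n j : ℕ) : ℝ :=
  2 * (-1 : ℝ) ^ (j + 1) * (Nat.choose (n + j - 1) (n - j)) *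
    ((Nat.factorial (2 * j - 1) : ℝ) /
      ((Nat.factorial (j - 1) : ℝ) * (Nat.factorial (j + 1) : ℝ)))

theorem koebeA_eq_sum (n : ℕ) :
    koebeA n = fun t ↦ ∑ j ∈ Icc 1 n, koebeCoeff n j * Real.exp (-(j : ℝ) * t) :=
  rfl

theorem koebeCoeff_add_succ (i d : ℕ) :
    koebeCoeff (i + d + 1) (i + 1) = 2 * (-1) ^ i * (2 * i + 1 + d).choose d *
      ((2 * i + 1).factorial / (i.factorial * (i + 2).factorial)) := by
  rw [koebeCoeff, show i + d + 1 + (i + 1) - 1 = 2 * i + 1 + d by omega,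
    show i + d + 1 - (i + 1) = d by omega, show 2 * (i + 1) - 1 = 2 * i + 1 by omega,
    Nat.add_sub_cancel]
  ring

theorem choose_add_succ_mul (m d : ℕ) :
    (m + (d + 1)).choose (d + 1) * ((d + 1) * (m + d + 2)) =
      (m + 2 + d).choose d * ((m + 1) * (m + 2)) := by
  have lower_succ : (m + (d + 1)).choose (d + 1) * (d + 1) =
      (m + (d + 1)).choose d * (m + 1) := by
    rw [Nat.choose_succ_right_eq, show m + (d + 1) - d = m + 1 by omega]
  have upper_succ : (m + (d + 1)).choose d * (m + d + 2) =
      (m + 2 + d).choose d * (m + 2) := by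
    rw [add_right_comm m 2 d, show m + 2 = m + (d + 1) + 1 - d by omega]
    exact Nat.choose_mul_succ_eq (m + (d + 1)) d
  linear_combination (m + d + 2) * lower_succ + (m + 1) * upper_succ

theorem factorial_two_mul_add_three_div_mul (K : Type*) [Field K] [CharZero K] (i : ℕ) :
    ((2 * i + 3).factorial : K) / ((i + 1).factorial * (i + 3).factorial) *
        ((i + 1) * (i + 3)) =
      (2 * i + 1).factorial / (i.factorial * (i + 2).factorial) *
        ((2 * i + 2) * (2 * i + 3)) := by
  have add_three_ne_zero : (i + 3 : K) ≠ 0 := mod_cast (i + 2).succ_ne_zero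
  rw [Nat.factorial_succ (2 * i + 2), Nat.factorial_succ (2 * i + 1), Nat.factorial_succ (i + 2),
    Nat.factorial_succ i]
  push_cast
  rw [show (i + 2 + 1 : K) = i + 3 by ring]
  field_simp
  ring

theorem koebeCoeff_mul_sq_sub_sq {n j : ℕ} (hj : 1 ≤ j) (hjn : j < n) :
    koebeCoeff n j * ((j : ℝ) ^ 2 - (n : ℝ) ^ 2) =
      koebeCoeff n (j + 1) * (((j : ℝ) + 1) ^ 2 - 1) := by
  obtain ⟨i, rfl⟩ := Nat.exists_eq_add_of_le' hj
  obtain ⟨d, rfl⟩ : ∃ d, n = i + (d + 1) + 1 := ⟨n - (i + 2), by omega⟩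
  have choose_ratio : ((2 * i + 1 + (d + 1)).choose (d + 1) : ℝ) *
      ((d + 1) * (2 * i + 1 + d + 2)) =
        (2 * i + 3 + d).choose d * ((2 * i + 1 + 1) * (2 * i + 1 + 2)) :=
    mod_cast choose_add_succ_mul (2 * i + 1) d
  have factorial_ratio := factorial_two_mul_add_three_div_mul ℝ i
  have coeff_succ : koebeCoeff (i + (d + 1) + 1) (i + 1 + 1) =
      2 * (-1) ^ (i + 1) * (2 * i + 3 + d).choose d *
        ((2 * i + 3).factorial / ((i + 1).factorial * (i + 3).factorial)) := by
    rw [← add_assoc i d 1, add_right_comm i d 1]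
    exact koebeCoeff_add_succ (i + 1) d
  rw [koebeCoeff_add_succ, coeff_succ]
  push_cast
  linear_combination
    -(2 * (-1) ^ i * ((2 * i + 1).factorial / (i.factorial * (i + 2).factorial) : ℝ)) *
        choose_ratio +
      2 * (-1) ^ i * ((2 * i + 3 + d).choose d : ℝ) * factorial_ratio

theorem deriv_sum_mul_exp {ι : Type*} (s : Finset ι) (c a : ι → ℝ) :
    deriv (fun t ↦ ∑ i ∈ s, c i * Real.exp (a i * t)) =
      fun t ↦ ∑ i ∈ s, c i * a i * Real.exp (a i * t) := by
  funext t
  refine (HasDerivAt.fun_sum fun i _ ↦ ?_).deriv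
  simpa only [mul_assoc, mul_comm (a i) (Real.exp _)] using
    (hasDerivAt_const_mul (a i)).exp.const_mul (c i)

theorem sum_mul_pow_of_recurrence {R : Type*} [CommRing R] {c : ℕ → R} {ν x y : R} {n : ℕ}
    (hn : 1 ≤ n) (hxy : y * x = 1)
    (hc : ∀ j ∈ Ico 1 n, c j * ((j : R) ^ 2 - ν) = c (j + 1) * (((j : R) + 1) ^ 2 - 1)) :
    ∑ j ∈ Icc 1 n, c j * ((1 - y) * (j : R) ^ 2 + (y - ν)) * x ^ j =
      c n * ((n : R) ^ 2 - ν) * x ^ n := by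
  induction n, hn using Nat.le_induction with
  | base => simp
  | succ n hn ih =>
    have recurrence := hc n (by simp [hn])
    rw [sum_Icc_succ_top (by omega), ih fun j hj ↦ hc j (Ico_subset_Ico_right n.le_succ hj)]
    push_cast
    linear_combination x ^ n * recurrence - c (n + 1) * (((n : R) + 1) ^ 2 - 1) * x ^ n * hxy

theorem sum_mul_exp_neg_ode_of_recurrence {c : ℕ → ℝ} {ν : ℝ} {n : ℕ} (hn : 1 ≤ n)
    (hc : ∀ j ∈ Ico 1 n, c j * ((j : ℝ) ^ 2 - ν) = c (j + 1) * (((j : ℝ) + 1) ^ 2 - 1)) (t : ℝ) :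
    (1 - Real.exp t) * deriv (deriv fun t ↦ ∑ j ∈ Icc 1 n, c j * Real.exp (-(j : ℝ) * t)) t +
        (Real.exp t - ν) * ∑ j ∈ Icc 1 n, c j * Real.exp (-(j : ℝ) * t) =
      c n * ((n : ℝ) ^ 2 - ν) * Real.exp (-(n : ℝ) * t) := by
  have exp_pow (j : ℕ) : Real.exp (-(j : ℝ) * t) = Real.exp (-t) ^ j := by
    rw [← Real.exp_nat_mul, neg_mul_comm]
  have exp_mul_exp_neg : Real.exp t * Real.exp (-t) = 1 := by
    rw [← Real.exp_add, add_neg_cancel, Real.exp_zero]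
  simp only [deriv_sum_mul_exp, exp_pow]
  rw [← sum_mul_pow_of_recurrence hn exp_mul_exp_neg hc, mul_sum, mul_sum, ← sum_add_distrib]
  exact sum_congr rfl fun j _ ↦ by ring

/-- For `n ≥ 1`, `A_n` satisfies the second order ordinary differential equation
`(1 - e^t)·Ä_n(t) + (e^t - n²)·A_n(t) = 0`. -/
theorem koebeA_ode (n : ℕ) (hn : 1 ≤ n) (t : ℝ) :
    (1 - Real.exp t) * deriv (deriv (koebeA n)) t +
      (Real.exp t - (n : ℝ) ^ 2) * koebeA n t = 0 := by
  have recurrence : ∀ j ∈ Ico 1 n, koebeCoeff n j * ((j : ℝ) ^ 2 - (n : ℝ) ^ 2) =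
      koebeCoeff n (j + 1) * (((j : ℝ) + 1) ^ 2 - 1) := fun j hj ↦
    koebeCoeff_mul_sq_sub_sq (mem_Ico.1 hj).1 (mem_Ico.1 hj).2
  rw [koebeA_eq_sum, sum_mul_exp_neg_ode_of_recurrence hn recurrence, sub_self, mul_zero, zero_mul]
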